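/- arXiv:1901.06814 — 2 statements merged into one kernel-verified Lean document; each statement's English description precedes it below -/
import Mathlib

section
/- There exists a constant C > 0 such that for every integer k ≥ 1, |b_{k−1} − k^{−β}/Γ(1−β)| ≤ C·k^{−1−β}, where b_{k−1} = ∑_{j=0}^{k−1} ϖ_j; that is, b_{k−1} = k^{−β}/Γ(1−β) + O(k^{−1−β}). -/
open Finset

/-- Generalized binomial coefficient `C(α, j) = α(α−1)⋯(α−j+1)/j!`. -/
noncomputable def genBinom (α : ℝ) (j : ℕ) : ℝ :=
  (∏ i ∈ Finset.range j, (α - i)) / (Nat.factorial j)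

/-- The coefficients `ϖ_j = (−1)^j C(β, j)` of `(1−z)^β`. -/
noncomputable def varpi (β : ℝ) (j : ℕ) : ℝ := (-1 : ℝ) ^ j * genBinom β j

/-!
The partial sums of the coefficients of `(1 - z) ^ β` are the coefficients of `(1 - z) ^ (β - 1)`,
so `b_{k-1} = Γ(k - β) / (Γ(1 - β) Γ(k))`. It remains to show that
`Γ(x + a) / Γ(x) = x ^ a + O(x ^ (a - 1))` for every real `a`. Since
`Γ(x + a + 1) / Γ(x) = (x + a) Γ(x + a) / Γ(x)`, this estimate for `a` is equivalent to the one for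
`a + 1`, and for `0 ≤ a < 1` it follows from the log-convexity of `Γ`.
-/

section Varpi

theorem varpi_zero (α : ℝ) : varpi α 0 = 1 := by simp [varpi, genBinom]

theorem succ_mul_varpi_succ (α : ℝ) (n : ℕ) : (n + 1) * varpi α (n + 1) = (n - α) * varpi α n := by
  simp only [varpi, genBinom, prod_range_succ, Nat.factorial_succ, pow_succ]
  push_cast
  field_simp
  ring

theorem succ_mul_varpi_succ_eq_neg_mul_varpi_sub_one (α : ℝ) (n : ℕ) :
    (n + 1) * varpi α (n + 1) = -α * varpi (α - 1) n := by
  have hprod : ∏ i ∈ range (n + 1), (α - i) = (∏ i ∈ range n, (α - 1 - i)) * α := by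
    simp [prod_range_succ', sub_sub, add_comm]
  simp only [varpi, genBinom, hprod, Nat.factorial_succ, pow_succ]
  push_cast
  field_simp

theorem varpi_sub_one_succ (α : ℝ) (n : ℕ) :
    varpi (α - 1) (n + 1) = varpi (α - 1) n + varpi α (n + 1) := by
  have hn : (n : ℝ) + 1 ≠ 0 := by positivity
  refine mul_left_cancel₀ hn ?_
  linear_combination succ_mul_varpi_succ (α - 1) n -
    succ_mul_varpi_succ_eq_neg_mul_varpi_sub_one α n

theorem sum_range_succ_varpi (α : ℝ) (n : ℕ) :
    ∑ j ∈ range (n + 1), varpi α j = varpi (α - 1) n := by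
  induction n with
  | zero => simp [varpi_zero]
  | succ n ih => rw [sum_range_succ, ih, varpi_sub_one_succ]

theorem varpi_eq_Gamma_div {α : ℝ} (hα : ∀ m : ℕ, α ≠ m) (n : ℕ) :
    varpi α n = Real.Gamma (n - α) / (Real.Gamma (-α) * n.factorial) := by
  have hΓ : Real.Gamma (-α) ≠ 0 := Real.Gamma_ne_zero fun m => neg_injective.ne (hα m)
  induction n with
  | zero => simp [varpi_zero, hΓ]
  | succ n ih =>
    have hrec : Real.Gamma ((n + 1 : ℕ) - α) = (n - α) * Real.Gamma (n - α) := by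
      rw [← Real.Gamma_add_one (sub_ne_zero.2 (hα n).symm)]
      push_cast
      ring_nf
    have hn : (n : ℝ) + 1 ≠ 0 := by positivity
    refine mul_left_cancel₀ hn ?_
    rw [succ_mul_varpi_succ, ih, hrec, Nat.factorial_succ]
    push_cast
    field_simp

theorem sum_range_varpi_eq_Gamma_div {α : ℝ} (hα : ∀ m : ℕ, α ≠ m + 1) {k : ℕ} (hk : k ≠ 0) :
    ∑ j ∈ range k, varpi α j =
      Real.Gamma (k + -α) / Real.Gamma k / Real.Gamma (1 - α) := by
  obtain ⟨n, rfl⟩ := Nat.exists_eq_succ_of_ne_zero hk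
  have hα' : ∀ m : ℕ, α - 1 ≠ m := fun m h => hα m (sub_eq_iff_eq_add.1 h)
  rw [sum_range_succ_varpi, varpi_eq_Gamma_div hα', div_div, mul_comm, Nat.succ_eq_add_one,
    Nat.cast_succ, Real.Gamma_nat_eq_factorial]
  ring_nf

end Varpi

section GammaRatio

open Asymptotics Filter

theorem Gamma_add_le_rpow_mul_Gamma {x a : ℝ} (hx : 0 < x) (ha₀ : 0 ≤ a) (ha₁ : a ≤ 1) :
    Real.Gamma (x + a) ≤ x ^ a * Real.Gamma x := by
  rcases ha₀.eq_or_lt with rfl | ha₀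
  · simp
  rcases ha₁.eq_or_lt with rfl | ha₁
  · simp [Real.Gamma_add_one hx.ne']
  have hΓ : 0 < Real.Gamma x := Real.Gamma_pos_of_pos hx
  calc Real.Gamma (x + a) = Real.Gamma ((1 - a) * x + a * (x + 1)) := by ring_nf
    _ ≤ Real.Gamma x ^ (1 - a) * Real.Gamma (x + 1) ^ a :=
      Real.Gamma_mul_add_mul_le_rpow_Gamma_mul_rpow_Gamma hx (by positivity) (sub_pos.2 ha₁) ha₀
        (sub_add_cancel 1 a)
    _ = x ^ a * (Real.Gamma x ^ (1 - a) * Real.Gamma x ^ a) := by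
      rw [Real.Gamma_add_one hx.ne', Real.mul_rpow hx.le hΓ.le, mul_left_comm]
    _ = x ^ a * Real.Gamma x := by rw [← Real.rpow_add hΓ, sub_add_cancel, Real.rpow_one]

theorem mul_rpow_mul_Gamma_le_Gamma_add {x a : ℝ} (hx : 0 < x) (ha₀ : 0 ≤ a) (ha₁ : a ≤ 1) :
    x * (x + a) ^ (a - 1) * Real.Gamma x ≤ Real.Gamma (x + a) := by
  have hxa : 0 < x + a := by positivity
  have hstep : x * Real.Gamma x ≤ (x + a) ^ (1 - a) * Real.Gamma (x + a) := by
    simpa only [add_add_sub_cancel, Real.Gamma_add_one hx.ne'] using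
      Gamma_add_le_rpow_mul_Gamma hxa (sub_nonneg.2 ha₁) (sub_le_self 1 ha₀)
  calc x * (x + a) ^ (a - 1) * Real.Gamma x = (x + a) ^ (a - 1) * (x * Real.Gamma x) := by ring
    _ ≤ (x + a) ^ (a - 1) * ((x + a) ^ (1 - a) * Real.Gamma (x + a)) := by gcongr
    _ = Real.Gamma (x + a) := by
      rw [← mul_assoc, ← Real.rpow_add hxa, sub_add_sub_cancel, sub_self, Real.rpow_zero, one_mul]

theorem rpow_sub_mul_rpow_le_mul_rpow {x a : ℝ} (hx : 0 < x) (ha : 0 ≤ a) :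
    x ^ a - a * x ^ (a - 1) ≤ x * (x + a) ^ (a - 1) := by
  have hxa : 0 < x + a := by positivity
  have hratio : 1 - a / x ≤ x / (x + a) := by
    rw [one_sub_div hx.ne', div_le_div_iff₀ hx hxa]
    nlinarith [sq_nonneg a]
  calc x ^ a - a * x ^ (a - 1) = (1 - a / x) * x ^ a := by
        rw [Real.rpow_sub_one hx.ne']; ring
    _ ≤ x / (x + a) * x ^ a := by gcongr
    _ ≤ x / (x + a) * (x + a) ^ a := by gcongr; linarith
    _ = x * (x + a) ^ (a - 1) := by rw [Real.rpow_sub_one hxa.ne']; ring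

theorem abs_Gamma_add_div_Gamma_sub_rpow_le {x a : ℝ} (hx : 0 < x) (ha₀ : 0 ≤ a) (ha₁ : a ≤ 1) :
    |Real.Gamma (x + a) / Real.Gamma x - x ^ a| ≤ a * x ^ (a - 1) := by
  have hΓ : 0 < Real.Gamma x := Real.Gamma_pos_of_pos hx
  have hupper : Real.Gamma (x + a) / Real.Gamma x ≤ x ^ a :=
    (div_le_iff₀ hΓ).2 (Gamma_add_le_rpow_mul_Gamma hx ha₀ ha₁)
  have hlower : x * (x + a) ^ (a - 1) ≤ Real.Gamma (x + a) / Real.Gamma x :=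
    (le_div_iff₀ hΓ).2 (mul_rpow_mul_Gamma_le_Gamma_add hx ha₀ ha₁)
  rw [abs_sub_comm, abs_of_nonneg (sub_nonneg.2 hupper)]
  linarith [rpow_sub_mul_rpow_le_mul_rpow hx ha₀]

theorem isBigO_Gamma_add_div_Gamma_sub_rpow_add_one_iff (a : ℝ) :
    ((fun x : ℝ => Real.Gamma (x + (a + 1)) / Real.Gamma x - x ^ (a + 1)) =O[atTop]
        fun x => x ^ (a + 1 - 1)) ↔
      (fun x : ℝ => Real.Gamma (x + a) / Real.Gamma x - x ^ a) =O[atTop] fun x => x ^ (a - 1) := by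
  have hrec : (fun x : ℝ => Real.Gamma (x + (a + 1)) / Real.Gamma x - x ^ (a + 1)) =ᶠ[atTop]
      fun x => (x + a) * (Real.Gamma (x + a) / Real.Gamma x - x ^ a) + a * x ^ a := by
    filter_upwards [eventually_gt_atTop 0, eventually_gt_atTop (-a)] with x hx hxa
    rw [← add_assoc, Real.Gamma_add_one (by linarith), Real.rpow_add_one hx.ne']
    ring
  have hshift : (fun x : ℝ => x + a) =Θ[atTop] fun x => x :=
    (isTheta_refl _ _).add_isLittleO (isLittleO_const_id_atTop a)
  have hdiv : (fun x : ℝ => x ^ a / (x + a)) =Θ[atTop] fun x => x ^ (a - 1) :=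
    ((isTheta_refl (fun x : ℝ => x ^ a) _).div hshift).trans_eventuallyEq <| by
      filter_upwards [eventually_gt_atTop 0] with x hx using (Real.rpow_sub_one hx.ne' a).symm
  have hne : ∀ᶠ x : ℝ in atTop, x + a ≠ 0 :=
    (eventually_gt_atTop (-a)).mono fun x hx => by linarith
  rw [add_sub_cancel_right, isBigO_congr hrec .rfl,
    (isBigO_const_mul_self a _ _).add_iff_left, isBigO_mul_iff_isBigO_div hne,
    hdiv.isBigO_congr_right]

theorem isBigO_Gamma_add_div_Gamma_sub_rpow (a : ℝ) :
    (fun x : ℝ => Real.Gamma (x + a) / Real.Gamma x - x ^ a) =O[atTop] fun x => x ^ (a - 1) := by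
  have hper : Function.Periodic (fun b : ℝ => (fun x : ℝ => Real.Gamma (x + b) / Real.Gamma x -
      x ^ b) =O[atTop] fun x => x ^ (b - 1)) 1 :=
    fun b => propext (isBigO_Gamma_add_div_Gamma_sub_rpow_add_one_iff b)
  obtain ⟨b, ⟨hb₀, hb₁⟩, hab⟩ := hper.exists_mem_Ico₀ one_pos a
  refine hab.mpr (.of_bound b ?_)
  filter_upwards [eventually_gt_atTop 0] with x hx
  simpa only [Real.norm_eq_abs, abs_of_pos (Real.rpow_pos_of_pos hx _)] using
    abs_Gamma_add_div_Gamma_sub_rpow_le hx hb₀ hb₁.le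

end GammaRatio

section Asymptotics

open Asymptotics Filter

theorem isBigO_sum_range_varpi_sub_rpow {β : ℝ} (hβ : ∀ m : ℕ, β ≠ m + 1) :
    (fun k : ℕ => ∑ j ∈ range k, varpi β j - (k : ℝ) ^ (-β) / Real.Gamma (1 - β)) =O[atTop]
      fun k : ℕ => (k : ℝ) ^ (-1 - β) := by
  have hratio : (fun k : ℕ => (Real.Gamma (1 - β))⁻¹ *
      (Real.Gamma (k + -β) / Real.Gamma k - (k : ℝ) ^ (-β))) =O[atTop]
        fun k : ℕ => (k : ℝ) ^ (-β - 1) :=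
    (isBigO_Gamma_add_div_Gamma_sub_rpow (-β)).natCast_atTop.const_mul_left _
  rw [neg_sub_left, neg_add'] at hratio
  refine hratio.congr' ?_ .rfl
  filter_upwards [eventually_ne_atTop 0] with k hk
  rw [sum_range_varpi_eq_Gamma_div hβ hk]
  ring

theorem partial_sum_varpi_asymptotics_general (β : ℝ) (hβ : ∀ m : ℕ, β ≠ m + 1) :
    ∃ C : ℝ, 0 < C ∧ ∀ k : ℕ, 1 ≤ k →
      |(∑ j ∈ range k, varpi β j) - (k : ℝ) ^ (-β) / Real.Gamma (1 - β)| ≤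
        C * (k : ℝ) ^ (-1 - β) := by
  obtain ⟨C, hC, hbound⟩ := bound_of_isBigO_nat_atTop (isBigO_sum_range_varpi_sub_rpow hβ)
  refine ⟨C, hC, fun k hk => ?_⟩
  have hpos : 0 < (k : ℝ) ^ (-1 - β) := Real.rpow_pos_of_pos (by exact_mod_cast hk) _
  simpa only [Real.norm_eq_abs, abs_of_pos hpos] using hbound hpos.ne'

end Asymptotics

theorem partial_sum_varpi_asymptotics (β : ℝ) (hβ0 : 0 < β) (hβ1 : β < 1) :
    ∃ C : ℝ, 0 < C ∧ ∀ k : ℕ, 1 ≤ k →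
      |(∑ j ∈ Finset.range k, varpi β j) - (k : ℝ) ^ (-β) / Real.Gamma (1 - β)| ≤
        C * (k : ℝ) ^ (-1 - β) :=
  partial_sum_varpi_asymptotics_general β fun m => by linarith [m.cast_nonneg (α := ℝ)]
end

section
/- (Discrete fractional Grönwall inequality.) Let n_T ≥ 1, θ ∈ [0,1], and let (g^k)_{k=0}^{n_T} and (λ_l)_{l=0}^{n_T−1} be nonnegative real sequences. Suppose λ ≥ 0 satisfies λ ≥ ∑_{l=0}^{n_T−1} λ_l and the step size satisfies τ ≤ (2λ(1+β))^{−1/β}. If a nonnegative sequence (v^k)_{k=0}^{n_T} satisfies, for all 1 ≤ k ≤ n_T, D^{(β)}_τ (v^k)² ≤ ∑_{l=1}^{k} λ_{k−l}·(v^l)² + v^{k−θ}·g^{k−θ}, then for all 1 ≤ k ≤ n_T, v^k ≤ 2·E_β(2λ·t_k^β)·( v^0 + max_{1≤m≤k} ∑_{j=1}^{m} P_{m−j}·g^{j−θ} ). -/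
open Finset

/-- The coefficients `ϱ_j = (−1)^j C(−β, j)` of `(1−z)^{−β}`. -/
noncomputable def varrho (β : ℝ) (j : ℕ) : ℝ := (-1 : ℝ) ^ j * genBinom (-β) j

/-- The Mittag-Leffler function `E_β(z) = ∑_{l=0}^∞ z^l / Γ(1 + lβ)`. -/
noncomputable def mittagLeffler (β z : ℝ) : ℝ :=
  ∑' l : ℕ, z ^ l / Real.Gamma (1 + (l : ℝ) * β)

/-!
Since `(1 - z) ^ β` and `(1 - z) ^ (-β)` are inverse power series, convolution with `P` inverts the
discrete fractional derivative and turns the hypothesis into a bound on `(v^k)² - (v^0)²`. At an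
index where `v` attains its running maximum, one factor `v^k` can be divided out of that bound, so
the running maximum `u` of `v` satisfies the linear inequality `u_k ≤ G + λ ∑_{j ≤ k} P_{k-j} u_j`
there; it then holds at every index, because convolving a nonnegative kernel with a monotone
sequence gives a monotone sequence. The step-size restriction absorbs the term `j = k` at the cost
of a factor `2`, and strong induction concludes once `E_β(μ t_k^β)` is known to dominate
`1 + μ ∑_{j < k} P_{k-j} E_β(μ t_j^β)`. This is checked term by term in the series of `E_β`:
log-convexity of `Γ` gives `ϱ_m ≤ m ^ (β - 1) / Γ(β)`, and the resulting sum is a lower Riemann sum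
of a Beta integral.
-/

section Coefficients

lemma genBinom_eq_choose (α : ℝ) (j : ℕ) : genBinom α j = Ring.choose α j := by
  have eval_eq : (descPochhammer ℝ j).eval α = (descPochhammer ℤ j).smeval α := by
    rw [← descPochhammer_map (algebraMap ℤ ℝ), Polynomial.eval_map_algebraMap,
      Polynomial.aeval_eq_smeval]
  rw [Ring.choose_eq_smul, genBinom, ← descPochhammer_eval_eq_prod_range, eval_eq, smul_eq_mul,
    div_eq_inv_mul]

lemma mk_varpi (β : ℝ) :
    PowerSeries.mk (varpi β) = PowerSeries.rescale (-1) (PowerSeries.binomialSeries ℝ β) := by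
  ext j
  simp [varpi, genBinom_eq_choose]

lemma mk_varrho_mul_mk_varpi (β : ℝ) :
    PowerSeries.mk (varrho β) * PowerSeries.mk (varpi β) = 1 := by
  have varrho_eq : varrho β = varpi (-β) := rfl
  rw [varrho_eq, mk_varpi, mk_varpi, ← map_mul, ← PowerSeries.binomialSeries_add,
    neg_add_cancel, PowerSeries.binomialSeries_zero, map_one]

lemma coeff_mk_mul_mk {R : Type*} [CommSemiring R] (a w : ℕ → R) (k : ℕ) :
    PowerSeries.coeff k (PowerSeries.mk a * PowerSeries.mk w) =
      ∑ j ∈ range (k + 1), a (k - j) * w j := by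
  rw [mul_comm, PowerSeries.coeff_mul, Nat.sum_antidiagonal_eq_sum_range_succ_mk]
  simp only [PowerSeries.coeff_mk, mul_comm]

lemma sum_varrho_mul_sum_varpi_mul (β : ℝ) (w : ℕ → ℝ) (k : ℕ) :
    ∑ j ∈ range (k + 1), varrho β (k - j) * ∑ i ∈ range (j + 1), varpi β (j - i) * w i = w k := by
  have series_eq : PowerSeries.mk (fun j => ∑ i ∈ range (j + 1), varpi β (j - i) * w i) =
      PowerSeries.mk (varpi β) * PowerSeries.mk w := by
    ext j
    rw [coeff_mk_mul_mk, PowerSeries.coeff_mk]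
  rw [← coeff_mk_mul_mk, series_eq, ← mul_assoc, mk_varrho_mul_mk_varpi, one_mul,
    PowerSeries.coeff_mk]

lemma varrho_zero (β : ℝ) : varrho β 0 = 1 := by simp [varrho, genBinom]

lemma varrho_succ (β : ℝ) (m : ℕ) : varrho β (m + 1) = varrho β m * ((m + β) / (m + 1)) := by
  have hfac : (m.factorial : ℝ) ≠ 0 := by positivity
  simp only [varrho, genBinom, prod_range_succ, Nat.factorial_succ, pow_succ]
  push_cast
  field_simp
  ring

lemma varrho_eq_Gamma_div {β : ℝ} (hβ : 0 < β) (m : ℕ) :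
    varrho β m = Real.Gamma (m + β) / (Real.Gamma β * Real.Gamma (m + 1)) := by
  have hΓ : Real.Gamma β ≠ 0 := (Real.Gamma_pos_of_pos hβ).ne'
  induction m with
  | zero => simp [varrho_zero, hΓ]
  | succ m ih =>
    have hΓm : Real.Gamma (m + 1) ≠ 0 := (Real.Gamma_pos_of_pos (by positivity)).ne'
    have num_eq : Real.Gamma (m + 1 + β) = (m + β) * Real.Gamma (m + β) := by
      rw [← Real.Gamma_add_one (by positivity), add_right_comm]
    rw [varrho_succ, ih, Nat.cast_succ, num_eq, Real.Gamma_add_one (s := m + 1) (by positivity)]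
    field_simp

lemma varrho_nonneg {β : ℝ} (hβ : 0 < β) (m : ℕ) : 0 ≤ varrho β m := by
  rw [varrho_eq_Gamma_div hβ]
  positivity

end Coefficients

section Gamma

lemma log_Gamma_add_one {x : ℝ} (hx : 0 < x) :
    Real.log (Real.Gamma (x + 1)) = Real.log (Real.Gamma x) + Real.log x := by
  rw [Real.Gamma_add_one hx.ne', Real.log_mul hx.ne' (Real.Gamma_pos_of_pos hx).ne', add_comm]

lemma Gamma_add_le_Gamma_mul_rpow {x s : ℝ} (hx : 0 < x) (hs0 : 0 ≤ s) (hs1 : s ≤ 1) :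
    Real.Gamma (x + s) ≤ Real.Gamma x * x ^ s := by
  have hΓ := Real.Gamma_pos_of_pos hx
  have log_le : Real.log (Real.Gamma (x + s)) ≤ Real.log (Real.Gamma x * x ^ s) := by
    have convex := Real.convexOn_log_Gamma.2 (Set.mem_Ioi.2 hx)
      (Set.mem_Ioi.2 (by linarith : 0 < x + 1)) (sub_nonneg.2 hs1) hs0 (by ring)
    simp only [Function.comp_apply, smul_eq_mul, log_Gamma_add_one hx] at convex
    rw [Real.log_mul hΓ.ne' (by positivity), Real.log_rpow hx]
    ring_nf at convex ⊢
    exact convex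
  exact (Real.log_le_log_iff (Real.Gamma_pos_of_pos (by linarith)) (by positivity)).1 log_le

lemma Gamma_add_one_mul_rpow_le {x s : ℝ} (hx : 0 ≤ x) (hs : 0 < s) :
    Real.Gamma (x + 1) * x ^ s ≤ Real.Gamma (x + 1 + s) := by
  have hΓs : 0 < Real.Gamma (x + 1 + s) := Real.Gamma_pos_of_pos (by linarith)
  obtain rfl | hx := hx.eq_or_lt
  · simpa [Real.zero_rpow hs.ne'] using hΓs.le
  have hΓ : 0 < Real.Gamma (x + 1) := Real.Gamma_pos_of_pos (by linarith)
  have log_le : Real.log (Real.Gamma (x + 1) * x ^ s) ≤ Real.log (Real.Gamma (x + 1 + s)) := by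
    have slopes := Real.convexOn_log_Gamma.slope_mono_adjacent (Set.mem_Ioi.2 hx)
      (Set.mem_Ioi.2 (by linarith : 0 < x + 1 + s)) (lt_add_one x) (lt_add_of_pos_right _ hs)
    simp only [Function.comp_apply, add_sub_cancel_left, div_one] at slopes
    rw [le_div_iff₀ hs, log_Gamma_add_one hx, add_sub_cancel_left, mul_comm,
      ← log_Gamma_add_one hx] at slopes
    rw [Real.log_mul hΓ.ne' (by positivity), Real.log_rpow hx]
    linarith
  exact (Real.log_le_log_iff (by positivity) hΓs).1 log_le

lemma varrho_le_rpow_div_Gamma {β : ℝ} (hβ0 : 0 < β) (hβ1 : β ≤ 1) {m : ℕ} (hm : 0 < m) :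
    varrho β m ≤ (m : ℝ) ^ (β - 1) / Real.Gamma β := by
  have hm' : (0 : ℝ) < m := Nat.cast_pos.2 hm
  calc varrho β m = Real.Gamma (m + β) / (Real.Gamma β * (m * Real.Gamma m)) := by
        rw [varrho_eq_Gamma_div hβ0, Real.Gamma_add_one hm'.ne']
    _ ≤ Real.Gamma m * (m : ℝ) ^ β / (Real.Gamma β * (m * Real.Gamma m)) := by
        gcongr
        exact Gamma_add_le_Gamma_mul_rpow hm' hβ0.le hβ1
    _ = (m : ℝ) ^ (β - 1) / Real.Gamma β := by
        rw [Real.rpow_sub_one hm'.ne']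
        field_simp

end Gamma

section BetaIntegral

lemma integral_rpow_mul_sub_rpow {u v K : ℝ} (hu : 0 < u) (hv : 0 < v) (hK : 0 < K) :
    ∫ x in (0 : ℝ)..K, x ^ (u - 1) * (K - x) ^ (v - 1) =
      K ^ (u + v - 1) * ProbabilityTheory.beta u v := by
  have complex_eq : ((∫ x in (0 : ℝ)..K, x ^ (u - 1) * (K - x) ^ (v - 1) : ℝ) : ℂ) =
      ((K ^ (u + v - 1) : ℝ) : ℂ) * Complex.betaIntegral u v := by
    have cpow_eq : ((K ^ (u + v - 1) : ℝ) : ℂ) = (K : ℂ) ^ ((u : ℂ) + v - 1) := by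
      rw [Complex.ofReal_cpow hK.le]
      push_cast
      rfl
    rw [cpow_eq, ← Complex.betaIntegral_scaled _ _ hK, ← intervalIntegral.integral_ofReal]
    refine intervalIntegral.integral_congr fun x hx => ?_
    rw [Set.uIcc_of_le hK.le] at hx
    simp only [Complex.ofReal_mul, Complex.ofReal_cpow hx.1,
      Complex.ofReal_cpow (sub_nonneg.2 hx.2), Complex.ofReal_sub, Complex.ofReal_one]
  rw [ProbabilityTheory.beta_eq_betaIntegralReal u v hu hv, ← Complex.re_ofReal_mul, ← complex_eq,
    Complex.ofReal_re]

lemma intervalIntegrable_rpow_mul_sub_rpow {a b : ℝ} (ha : 0 ≤ a) (hb : -1 < b) (K : ℝ) :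
    IntervalIntegrable (fun x : ℝ => x ^ a * (K - x) ^ b) MeasureTheory.volume 0 K := by
  have sub_rpow : IntervalIntegrable (fun x : ℝ => (K - x) ^ b) MeasureTheory.volume 0 K := by
    simpa using
      ((intervalIntegral.intervalIntegrable_rpow' (a := 0) (b := K) hb).comp_sub_left K).symm
  exact sub_rpow.continuousOn_mul (Real.continuous_rpow_const ha).continuousOn

lemma sum_range_rpow_mul_sub_rpow_le_integral {a b : ℝ} (ha : 0 ≤ a) (hb : -1 < b) (hb0 : b ≤ 0)
    (k : ℕ) :
    ∑ j ∈ range k, (j : ℝ) ^ a * ((k : ℝ) - j) ^ b ≤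
      ∫ x in (0 : ℝ)..k, x ^ a * ((k : ℝ) - x) ^ b := by
  have integrable : MeasureTheory.IntegrableOn (fun x : ℝ => x ^ a * ((k : ℝ) - x) ^ b)
      (Set.Ico ((0 : ℕ) : ℝ) k) := by
    rw [← intervalIntegrable_iff_integrableOn_Ico_of_le (by simp), Nat.cast_zero]
    exact intervalIntegrable_rpow_mul_sub_rpow ha hb k
  have le_on_cell : ∀ j ∈ Set.Ico 0 k, ∀ x ∈ Set.Ico (j : ℝ) ↑(j + 1),
      (j : ℝ) ^ a * ((k : ℝ) - j) ^ b ≤ x ^ a * ((k : ℝ) - x) ^ b := by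
    intro j hj x hx
    have hjk : ((j + 1 : ℕ) : ℝ) ≤ k := Nat.cast_le.2 hj.2
    have hxk : 0 < (k : ℝ) - x := sub_pos.2 (hx.2.trans_le hjk)
    have hjx : (j : ℝ) ≤ x := hx.1
    exact mul_le_mul (by gcongr) (Real.rpow_le_rpow_of_nonpos hxk (by linarith) hb0)
      (Real.rpow_nonneg (by linarith) b) (Real.rpow_nonneg (j.cast_nonneg.trans hjx) a)
  simpa using sum_Ico_le_integral_of_le (f := fun x : ℝ => x ^ a * ((k : ℝ) - x) ^ b)
    k.zero_le le_on_cell integrable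

end BetaIntegral

section FractionalDerivative

/-- The discrete fractional derivative `D^{(β)}_τ w^k` of order `β` with step `τ`. -/
noncomputable def fracDeriv (β τ : ℝ) (w : ℕ → ℝ) (k : ℕ) : ℝ :=
  τ ^ (-β) * ∑ j ∈ range (k + 1), varpi β (k - j) * (w j - w 0)

/-- The kernel `P_m = τ^β ϱ_m` of the discrete fractional integral, which inverts `fracDeriv`. -/
noncomputable def fracKernel (β τ : ℝ) (m : ℕ) : ℝ := τ ^ β * varrho β m

variable {β τ : ℝ}

lemma fracKernel_zero : fracKernel β τ 0 = τ ^ β := by rw [fracKernel, varrho_zero, mul_one]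

lemma fracKernel_nonneg (hβ : 0 < β) (hτ : 0 ≤ τ) (m : ℕ) : 0 ≤ fracKernel β τ m :=
  mul_nonneg (Real.rpow_nonneg hτ β) (varrho_nonneg hβ m)

lemma sum_fracKernel_mul_fracDeriv (hτ : 0 < τ) (w : ℕ → ℝ) (k : ℕ) :
    ∑ j ∈ Icc 1 k, fracKernel β τ (k - j) * fracDeriv β τ w j = w k - w 0 := by
  have term_eq (j : ℕ) : fracKernel β τ (k - j) * fracDeriv β τ w j =
      varrho β (k - j) * ∑ i ∈ range (j + 1), varpi β (j - i) * (w i - w 0) := by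
    rw [fracKernel, fracDeriv, Real.rpow_neg hτ.le]
    field_simp
  have fracDeriv_zero : fracDeriv β τ w 0 = 0 := by simp [fracDeriv]
  calc ∑ j ∈ Icc 1 k, fracKernel β τ (k - j) * fracDeriv β τ w j
      = ∑ j ∈ range (k + 1), fracKernel β τ (k - j) * fracDeriv β τ w j := by
        refine sum_subset (fun j hj => by grind) fun j hj hj' => ?_
        obtain rfl : j = 0 := by grind
        rw [fracDeriv_zero, mul_zero]
    _ = w k - w 0 := by
        simp only [term_eq]
        exact sum_varrho_mul_sum_varpi_mul β (fun i => w i - w 0) k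

lemma le_add_sum_fracKernel_mul_of_fracDeriv_sq_le (hβ : 0 < β) (hτ : 0 < τ) {v f : ℕ → ℝ} {k : ℕ}
    (hv0 : 0 ≤ v 0) (hvk : v 0 ≤ v k) (hf : ∀ j ∈ Icc 1 k, 0 ≤ f j)
    (hD : ∀ j ∈ Icc 1 k, fracDeriv β τ (fun i => v i ^ 2) j ≤ v k * f j) :
    v k ≤ v 0 + ∑ j ∈ Icc 1 k, fracKernel β τ (k - j) * f j := by
  set F := ∑ j ∈ Icc 1 k, fracKernel β τ (k - j) * f j
  have hF : 0 ≤ F := sum_nonneg fun j hj => mul_nonneg (fracKernel_nonneg hβ hτ.le _) (hf j hj)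
  obtain hk | hk := (hv0.trans hvk).eq_or_lt
  · rw [← hk]
    positivity
  have sq_sub_le : v k ^ 2 - v 0 ^ 2 ≤ v k * F := by
    rw [← sum_fracKernel_mul_fracDeriv (β := β) hτ (fun i => v i ^ 2) k, mul_sum]
    refine sum_le_sum fun j hj => ?_
    rw [mul_left_comm]
    exact mul_le_mul_of_nonneg_left (hD j hj) (fracKernel_nonneg hβ hτ.le _)
  refine le_of_mul_le_mul_left ?_ hk
  linarith [mul_le_mul_of_nonneg_right hvk hv0]

lemma sum_fracKernel_mul_rpow_le (hβ0 : 0 < β) (hβ1 : β ≤ 1) (hτ : 0 < τ) {a : ℝ} (ha : 0 ≤ a)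
    (k : ℕ) :
    ∑ j ∈ range k, fracKernel β τ (k - j) * (j * τ) ^ a ≤
      Real.Gamma (1 + a) / Real.Gamma (1 + a + β) * (k * τ) ^ (a + β) := by
  obtain rfl | hk := k.eq_zero_or_pos
  · simp only [range_zero, sum_empty]
    positivity
  have term_le : ∀ j ∈ range k, fracKernel β τ (k - j) * (j * τ) ^ a ≤
      τ ^ (a + β) / Real.Gamma β * ((j : ℝ) ^ a * ((k : ℝ) - j) ^ (β - 1)) := by
    intro j hj
    have hjk : j < k := mem_range.1 hj
    calc fracKernel β τ (k - j) * (j * τ) ^ a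
        ≤ τ ^ β * (((k - j : ℕ) : ℝ) ^ (β - 1) / Real.Gamma β) * (j * τ) ^ a := by
          unfold fracKernel
          gcongr
          exact varrho_le_rpow_div_Gamma hβ0 hβ1 (Nat.sub_pos_of_lt hjk)
      _ = τ ^ (a + β) / Real.Gamma β * ((j : ℝ) ^ a * ((k : ℝ) - j) ^ (β - 1)) := by
          rw [Nat.cast_sub hjk.le, Real.mul_rpow j.cast_nonneg hτ.le, Real.rpow_add hτ]
          ring
  have riemann_sum_le : ∑ j ∈ range k, (j : ℝ) ^ a * ((k : ℝ) - j) ^ (β - 1) ≤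
      (k : ℝ) ^ (a + β) * ProbabilityTheory.beta (1 + a) β := by
    refine (sum_range_rpow_mul_sub_rpow_le_integral ha (by linarith) (by linarith) k).trans_eq ?_
    have beta_integral := integral_rpow_mul_sub_rpow (by linarith : 0 < 1 + a) hβ0
      (Nat.cast_pos.2 hk : (0 : ℝ) < k)
    rwa [add_sub_cancel_left, add_assoc, add_sub_cancel_left] at beta_integral
  calc ∑ j ∈ range k, fracKernel β τ (k - j) * (j * τ) ^ a
      ≤ τ ^ (a + β) / Real.Gamma β * ∑ j ∈ range k, (j : ℝ) ^ a * ((k : ℝ) - j) ^ (β - 1) := by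
        rw [mul_sum]
        exact sum_le_sum term_le
    _ ≤ τ ^ (a + β) / Real.Gamma β * ((k : ℝ) ^ (a + β) * ProbabilityTheory.beta (1 + a) β) := by
        gcongr
    _ = Real.Gamma (1 + a) / Real.Gamma (1 + a + β) * (k * τ) ^ (a + β) := by
        rw [Real.mul_rpow k.cast_nonneg hτ.le, ProbabilityTheory.beta]
        field_simp

end FractionalDerivative

section MittagLeffler

variable {β : ℝ}

lemma Gamma_one_add_natCast_mul_pos (hβ : 0 ≤ β) (l : ℕ) : 0 < Real.Gamma (1 + l * β) :=
  Real.Gamma_pos_of_pos (by positivity)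

lemma summable_mittagLeffler (hβ : 0 < β) (z : ℝ) :
    Summable fun l : ℕ => z ^ l / Real.Gamma (1 + l * β) := by
  have rpow_tendsto : Filter.Tendsto (fun l : ℕ => ((l : ℝ) * β) ^ β) Filter.atTop Filter.atTop :=
    (tendsto_rpow_atTop hβ).comp (tendsto_natCast_atTop_atTop.atTop_mul_const hβ)
  refine summable_of_ratio_norm_eventually_le one_half_lt_one ?_
  filter_upwards [rpow_tendsto.eventually_ge_atTop (2 * |z|)] with l hl
  have hΓ := Gamma_one_add_natCast_mul_pos hβ.le l
  have hΓ' := Gamma_one_add_natCast_mul_pos hβ.le (l + 1)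
  have Gamma_ratio : Real.Gamma (1 + l * β) * (2 * |z|) ≤ Real.Gamma (1 + (l + 1 : ℕ) * β) := by
    calc Real.Gamma (1 + l * β) * (2 * |z|) ≤ Real.Gamma (l * β + 1) * (l * β) ^ β := by
          rw [add_comm 1]
          gcongr
      _ ≤ Real.Gamma (l * β + 1 + β) := Gamma_add_one_mul_rpow_le (by positivity) hβ
      _ = Real.Gamma (1 + (l + 1 : ℕ) * β) := by
          push_cast
          ring_nf
  rw [norm_div, norm_div, norm_pow, norm_pow, Real.norm_eq_abs z, Real.norm_of_nonneg hΓ.le,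
    Real.norm_of_nonneg hΓ'.le, div_le_iff₀ hΓ', pow_succ]
  calc |z| ^ l * |z|
      = 1 / 2 * (|z| ^ l / Real.Gamma (1 + l * β)) * (Real.Gamma (1 + l * β) * (2 * |z|)) := by
        field_simp
    _ ≤ 1 / 2 * (|z| ^ l / Real.Gamma (1 + l * β)) * Real.Gamma (1 + (l + 1 : ℕ) * β) := by gcongr

lemma mul_rpow_pow_eq (μ : ℝ) {t : ℝ} (ht : 0 ≤ t) (l : ℕ) :
    (μ * t ^ β) ^ l = μ ^ l * t ^ (l * β) := by
  rw [mul_pow, ← Real.rpow_mul_natCast ht, mul_comm β]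

variable {τ μ : ℝ}

lemma mul_sum_fracKernel_mul_mittagLeffler_term_le (hβ0 : 0 < β) (hβ1 : β ≤ 1) (hτ : 0 < τ)
    (hμ : 0 ≤ μ) (k l : ℕ) :
    μ * ∑ j ∈ range k,
        fracKernel β τ (k - j) * ((μ * (j * τ) ^ β) ^ l / Real.Gamma (1 + l * β)) ≤
      (μ * (k * τ) ^ β) ^ (l + 1) / Real.Gamma (1 + (l + 1 : ℕ) * β) := by
  have term_eq (j : ℕ) : fracKernel β τ (k - j) * ((μ * (j * τ) ^ β) ^ l / Real.Gamma (1 + l * β)) =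
      μ ^ l / Real.Gamma (1 + l * β) * (fracKernel β τ (k - j) * (j * τ) ^ (l * β)) := by
    rw [mul_rpow_pow_eq μ (by positivity)]
    ring
  simp only [term_eq]
  rw [← mul_sum]
  calc μ * (μ ^ l / Real.Gamma (1 + l * β) *
        ∑ j ∈ range k, fracKernel β τ (k - j) * (j * τ) ^ (l * β))
      ≤ μ * (μ ^ l / Real.Gamma (1 + l * β) * (Real.Gamma (1 + l * β) /
          Real.Gamma (1 + l * β + β) * (k * τ) ^ (l * β + β))) := by
        gcongr
        exact sum_fracKernel_mul_rpow_le hβ0 hβ1 hτ (by positivity) k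
    _ = (μ * (k * τ) ^ β) ^ (l + 1) / Real.Gamma (1 + (l + 1 : ℕ) * β) := by
        rw [mul_rpow_pow_eq μ (by positivity), Nat.cast_succ, add_one_mul, ← add_assoc, pow_succ]
        field_simp

lemma one_add_mul_sum_fracKernel_mul_mittagLeffler_le (hβ0 : 0 < β) (hβ1 : β ≤ 1) (hτ : 0 < τ)
    (hμ : 0 ≤ μ) (k : ℕ) :
    1 + μ * ∑ j ∈ range k, fracKernel β τ (k - j) * mittagLeffler β (μ * (j * τ) ^ β) ≤
      mittagLeffler β (μ * (k * τ) ^ β) := by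
  have summable_term (j : ℕ) : Summable fun l : ℕ =>
      fracKernel β τ (k - j) * ((μ * (j * τ) ^ β) ^ l / Real.Gamma (1 + l * β)) :=
    (summable_mittagLeffler hβ0 _).mul_left _
  have summable_k := summable_mittagLeffler hβ0 (μ * (k * τ) ^ β)
  calc 1 + μ * ∑ j ∈ range k, fracKernel β τ (k - j) * mittagLeffler β (μ * (j * τ) ^ β)
      = 1 + ∑' l : ℕ, μ * ∑ j ∈ range k,
          fracKernel β τ (k - j) * ((μ * (j * τ) ^ β) ^ l / Real.Gamma (1 + l * β)) := by
        rw [tsum_mul_left, Summable.tsum_finsetSum fun j _ => summable_term j]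
        simp only [tsum_mul_left, mittagLeffler]
    _ ≤ 1 + ∑' l : ℕ, (μ * (k * τ) ^ β) ^ (l + 1) / Real.Gamma (1 + (l + 1 : ℕ) * β) := by
        gcongr with l
        · exact (summable_sum fun j _ => summable_term j).mul_left μ
        · exact (summable_nat_add_iff 1).2 summable_k
        · exact mul_sum_fracKernel_mul_mittagLeffler_term_le hβ0 hβ1 hτ hμ k l
    _ = mittagLeffler β (μ * (k * τ) ^ β) := by
        rw [mittagLeffler, summable_k.tsum_eq_zero_add]
        simp

end MittagLeffler

section Gronwall

variable {β τ lambda : ℝ} {lam v γ : ℕ → ℝ} {n : ℕ}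

lemma mul_rpow_le_one_of_le_rpow_neg_one_div {c : ℝ} (hc : 0 ≤ c) (hβ : 0 < β) (hτ : 0 ≤ τ)
    (hτc : τ ≤ c ^ (-(1 / β))) : c * τ ^ β ≤ 1 := by
  obtain rfl | hc := hc.eq_or_lt
  · simp
  calc c * τ ^ β ≤ c * (c ^ (-(1 / β))) ^ β := by gcongr
    _ = 1 := by
      rw [← Real.rpow_mul hc.le, neg_mul, one_div_mul_cancel hβ.ne', Real.rpow_neg_one,
        mul_inv_cancel₀ hc.ne']

lemma two_mul_mul_rpow_le_one (hβ : 0 < β) (hτ : 0 ≤ τ) (hlambda : 0 ≤ lambda)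
    (hstep : τ ≤ (2 * lambda * (1 + β)) ^ (-(1 / β))) : 2 * lambda * τ ^ β ≤ 1 := by
  calc 2 * lambda * τ ^ β ≤ 2 * lambda * (1 + β) * τ ^ β := by
        have le_scaled : 2 * lambda ≤ 2 * lambda * (1 + β) :=
          le_mul_of_one_le_right (by positivity) (by linarith)
        gcongr
    _ ≤ 1 := mul_rpow_le_one_of_le_rpow_neg_one_div (by positivity) hβ hτ hstep

lemma convexComb_le_partialSups {θ : ℝ} (hθ0 : 0 ≤ θ) (hθ1 : θ ≤ 1) (v : ℕ → ℝ) (k : ℕ) :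
    (1 - θ) * v k + θ * v (k - 1) ≤ partialSups v k :=
  convex_Iic (partialSups v k) (le_partialSups v k) (le_partialSups_of_le v (k.sub_le 1))
    (sub_nonneg.2 hθ1) hθ0 (sub_add_cancel 1 θ)

lemma monotone_sum_range_mul {a u : ℕ → ℝ} (ha : ∀ m, 0 ≤ a m) (hu0 : 0 ≤ u 0) (hu : Monotone u) :
    Monotone fun k => ∑ j ∈ range (k + 1), a (k - j) * u j := by
  refine monotone_nat_of_le_succ fun k => ?_
  calc ∑ j ∈ range (k + 1), a (k - j) * u j
      ≤ ∑ j ∈ range (k + 1), a (k + 1 - (j + 1)) * u (j + 1) := by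
        refine sum_le_sum fun j _ => ?_
        rw [Nat.add_sub_add_right]
        exact mul_le_mul_of_nonneg_left (hu j.le_succ) (ha _)
    _ ≤ ∑ j ∈ range (k + 1 + 1), a (k + 1 - j) * u j := by
        rw [sum_range_succ' _ (k + 1)]
        exact le_add_of_nonneg_right (mul_nonneg (ha _) hu0)

lemma sum_Icc_mul_le_mul_of_le {x : ℕ → ℝ} {B : ℝ} (hlam : ∀ l < n, 0 ≤ lam l)
    (hsum : ∑ l ∈ range n, lam l ≤ lambda) (hB : 0 ≤ B) {j : ℕ} (hj : j ≤ n)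
    (hx : ∀ l ∈ Icc 1 j, x l ≤ B) :
    ∑ l ∈ Icc 1 j, lam (j - l) * x l ≤ lambda * B := by
  have reflect : ∑ l ∈ Icc 1 j, lam (j - l) = ∑ l ∈ range j, lam l := by
    simpa [Ico_add_one_right_eq_Icc] using sum_Ico_reflect lam 1 (le_refl (j + 1))
  calc ∑ l ∈ Icc 1 j, lam (j - l) * x l
      ≤ ∑ l ∈ Icc 1 j, lam (j - l) * B := by
        refine sum_le_sum fun l hl => mul_le_mul_of_nonneg_left (hx l hl) (hlam _ ?_)
        grind
    _ = (∑ l ∈ range j, lam l) * B := by rw [← sum_mul, reflect]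
    _ ≤ (∑ l ∈ range n, lam l) * B := by
        gcongr with l hl
        grind
    _ ≤ lambda * B := by gcongr

lemma le_two_mul_mittagLeffler_of_le_add_sum_fracKernel (hβ0 : 0 < β) (hβ1 : β ≤ 1) (hτ : 0 < τ)
    (hlambda : 0 ≤ lambda) (hstep : 2 * lambda * τ ^ β ≤ 1) {u : ℕ → ℝ} {G : ℝ}
    (hu0 : ∀ k ≤ n, 0 ≤ u k) (hG : 0 ≤ G)
    (hu : ∀ k ≤ n, u k ≤ G + lambda * ∑ j ∈ range (k + 1), fracKernel β τ (k - j) * u j) :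
    ∀ k ≤ n, u k ≤ 2 * mittagLeffler β (2 * lambda * (k * τ) ^ β) * G := by
  intro k
  induction k using Nat.strong_induction_on with
  | _ k ih =>
    intro hk
    have absorb : u k ≤ 2 * (G + lambda * ∑ j ∈ range k, fracKernel β τ (k - j) * u j) := by
      have huk := hu k hk
      rw [sum_range_succ, Nat.sub_self, fracKernel_zero] at huk
      linarith [mul_le_mul_of_nonneg_right hstep (hu0 k hk)]
    calc u k ≤ 2 * (G + lambda * ∑ j ∈ range k, fracKernel β τ (k - j) * u j) := absorb
      _ ≤ 2 * (G + lambda * ∑ j ∈ range k, fracKernel β τ (k - j) *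
            (2 * mittagLeffler β (2 * lambda * (j * τ) ^ β) * G)) := by
          gcongr with j hj
          · exact fracKernel_nonneg hβ0 hτ.le _
          · have hjk := mem_range.1 hj
            exact ih j hjk (hjk.le.trans hk)
      _ = 2 * (1 + 2 * lambda * ∑ j ∈ range k, fracKernel β τ (k - j) *
            mittagLeffler β (2 * lambda * (j * τ) ^ β)) * G := by
          have pull_out (j : ℕ) : fracKernel β τ (k - j) *
              (2 * mittagLeffler β (2 * lambda * (j * τ) ^ β) * G) =
              fracKernel β τ (k - j) * mittagLeffler β (2 * lambda * (j * τ) ^ β) * (2 * G) := by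
            ring
          simp only [pull_out, ← sum_mul]
          ring
      _ ≤ 2 * mittagLeffler β (2 * lambda * (k * τ) ^ β) * G := by
          gcongr
          exact one_add_mul_sum_fracKernel_mul_mittagLeffler_le hβ0 hβ1 hτ (by positivity) k

lemma le_add_sum_fracKernel_mul_partialSups (hβ : 0 < β) (hτ : 0 < τ)
    (hlambda : 0 ≤ lambda) (hlam : ∀ l < n, 0 ≤ lam l) (hsum : ∑ l ∈ range n, lam l ≤ lambda)
    (hv : ∀ k ≤ n, 0 ≤ v k) (hγ : ∀ k ∈ Icc 1 n, 0 ≤ γ k)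
    (hD : ∀ k ∈ Icc 1 n, fracDeriv β τ (fun i => v i ^ 2) k ≤
      ∑ l ∈ Icc 1 k, lam (k - l) * v l ^ 2 + partialSups v k * γ k)
    {m : ℕ} (hm : m ≤ n) (hmax : ∀ j ≤ m, v j ≤ v m) :
    v m ≤ v 0 + ∑ j ∈ Icc 1 m, fracKernel β τ (m - j) * γ j +
      lambda * ∑ j ∈ range (m + 1), fracKernel β τ (m - j) * partialSups v j := by
  have sups_nonneg (j : ℕ) : 0 ≤ partialSups v j :=
    (hv 0 n.zero_le).trans (le_partialSups_of_le v j.zero_le)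
  have fracDeriv_le : ∀ j ∈ Icc 1 m,
      fracDeriv β τ (fun i => v i ^ 2) j ≤ v m * (γ j + lambda * partialSups v j) := by
    intro j hj
    obtain ⟨hj1, hjm⟩ := mem_Icc.1 hj
    have memory_le : ∑ l ∈ Icc 1 j, lam (j - l) * v l ^ 2 ≤ lambda * (v m * partialSups v j) := by
      refine sum_Icc_mul_le_mul_of_le hlam hsum (mul_nonneg (hv m hm) (sups_nonneg j))
        (hjm.trans hm) fun l hl => ?_
      have hlj := (mem_Icc.1 hl).2
      rw [sq]
      exact mul_le_mul (hmax l (hlj.trans hjm)) (le_partialSups_of_le v hlj)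
        (hv l (hlj.trans (hjm.trans hm))) (hv m hm)
    have hjn : j ∈ Icc 1 n := mem_Icc.2 ⟨hj1, hjm.trans hm⟩
    have source_le : partialSups v j * γ j ≤ v m * γ j :=
      mul_le_mul_of_nonneg_right (partialSups_le v j _ fun i hi => hmax i (hi.trans hjm)) (hγ j hjn)
    linarith [hD j hjn]
  have source_nonneg : ∀ j ∈ Icc 1 m, 0 ≤ γ j + lambda * partialSups v j := fun j hj =>
    add_nonneg (hγ j (Icc_subset_Icc_right hm hj)) (mul_nonneg hlambda (sups_nonneg j))
  calc v m ≤ v 0 + ∑ j ∈ Icc 1 m, fracKernel β τ (m - j) * (γ j + lambda * partialSups v j) :=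
        le_add_sum_fracKernel_mul_of_fracDeriv_sq_le hβ hτ (hv 0 n.zero_le) (hmax 0 m.zero_le)
          source_nonneg fracDeriv_le
    _ = v 0 + ∑ j ∈ Icc 1 m, fracKernel β τ (m - j) * γ j +
          lambda * ∑ j ∈ Icc 1 m, fracKernel β τ (m - j) * partialSups v j := by
        simp only [mul_add, sum_add_distrib, mul_sum, mul_left_comm lambda, add_assoc]
    _ ≤ v 0 + ∑ j ∈ Icc 1 m, fracKernel β τ (m - j) * γ j +
          lambda * ∑ j ∈ range (m + 1), fracKernel β τ (m - j) * partialSups v j := by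
        gcongr
        · exact fun j _ _ => mul_nonneg (fracKernel_nonneg hβ hτ.le _) (sups_nonneg j)
        · grind

lemma partialSups_le_add_sum_fracKernel_mul_partialSups (hβ : 0 < β) (hτ : 0 < τ)
    (hlambda : 0 ≤ lambda) (hlam : ∀ l < n, 0 ≤ lam l) (hsum : ∑ l ∈ range n, lam l ≤ lambda)
    (hv : ∀ k ≤ n, 0 ≤ v k) (hγ : ∀ k ∈ Icc 1 n, 0 ≤ γ k)
    (hD : ∀ k ∈ Icc 1 n, fracDeriv β τ (fun i => v i ^ 2) k ≤
      ∑ l ∈ Icc 1 k, lam (k - l) * v l ^ 2 + partialSups v k * γ k)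
    {k : ℕ} (hk : k ≤ n) {G : ℝ}
    (hG : ∀ m ≤ k, v 0 + ∑ j ∈ Icc 1 m, fracKernel β τ (m - j) * γ j ≤ G) :
    partialSups v k ≤
      G + lambda * ∑ j ∈ range (k + 1), fracKernel β τ (k - j) * partialSups v j := by
  obtain ⟨m, hmk, hm⟩ := exists_partialSups_eq v k
  have hmax : ∀ j ≤ m, v j ≤ v m := fun j hj => hm ▸ le_partialSups_of_le v (hj.trans hmk)
  have convolution_le := monotone_sum_range_mul (fracKernel_nonneg hβ hτ.le)
    ((hv 0 n.zero_le).trans (le_partialSups v 0)) (partialSups v).monotone hmk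
  calc partialSups v k = v m := hm
    _ ≤ v 0 + ∑ j ∈ Icc 1 m, fracKernel β τ (m - j) * γ j +
          lambda * ∑ j ∈ range (m + 1), fracKernel β τ (m - j) * partialSups v j :=
        le_add_sum_fracKernel_mul_partialSups hβ hτ hlambda hlam hsum hv hγ hD (hmk.trans hk) hmax
    _ ≤ G + lambda * ∑ j ∈ range (k + 1), fracKernel β τ (k - j) * partialSups v j :=
        add_le_add (hG m hmk) (mul_le_mul_of_nonneg_left convolution_le hlambda)

theorem discrete_fractional_gronwall_general (hβ0 : 0 < β) (hβ1 : β ≤ 1) (hτ : 0 < τ)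
    (hlam : ∀ l < n, 0 ≤ lam l) (hsum : ∑ l ∈ range n, lam l ≤ lambda)
    (hstep : 2 * lambda * τ ^ β ≤ 1)
    (hv : ∀ k ≤ n, 0 ≤ v k) (hγ : ∀ k ∈ Icc 1 n, 0 ≤ γ k)
    (hD : ∀ k ∈ Icc 1 n, fracDeriv β τ (fun i => v i ^ 2) k ≤
      ∑ l ∈ Icc 1 k, lam (k - l) * v l ^ 2 + partialSups v k * γ k)
    {k : ℕ} (hk : 1 ≤ k) (hkn : k ≤ n) :
    v k ≤ 2 * mittagLeffler β (2 * lambda * (k * τ) ^ β) *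
      (v 0 + (Icc 1 k).sup' (nonempty_Icc.2 hk)
        fun m => ∑ j ∈ Icc 1 m, fracKernel β τ (m - j) * γ j) := by
  set S : ℕ → ℝ := fun m => ∑ j ∈ Icc 1 m, fracKernel β τ (m - j) * γ j
  set G := v 0 + (Icc 1 k).sup' (nonempty_Icc.2 hk) S
  have hlambda : 0 ≤ lambda := (sum_nonneg fun l hl => hlam l (mem_range.1 hl)).trans hsum
  have hv0 : 0 ≤ v 0 := hv 0 n.zero_le
  have S_zero_le : S 0 ≤ S k := by
    simpa [S] using sum_nonneg fun j hj =>
      mul_nonneg (fracKernel_nonneg hβ0 hτ.le _) (hγ j (Icc_subset_Icc_right hkn hj))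
  have S_le : ∀ m ∈ Icc 1 k, S m ≤ (Icc 1 k).sup' (nonempty_Icc.2 hk) S := fun m hm => le_sup' S hm
  have hG : ∀ m ≤ k, v 0 + S m ≤ G := by
    intro m hm
    refine add_le_add_right ?_ (v 0)
    obtain rfl | hm0 := m.eq_zero_or_pos
    · exact S_zero_le.trans (S_le k (right_mem_Icc.2 hk))
    · exact S_le m (mem_Icc.2 ⟨hm0, hm⟩)
  have hG0 : 0 ≤ G := (add_nonneg hv0 (by simp [S])).trans (hG 0 k.zero_le)
  have sups_nonneg (j : ℕ) : 0 ≤ partialSups v j := hv0.trans (le_partialSups_of_le v j.zero_le)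
  have sups_le : ∀ j ≤ k, partialSups v j ≤
      G + lambda * ∑ i ∈ range (j + 1), fracKernel β τ (j - i) * partialSups v i :=
    fun j hj => partialSups_le_add_sum_fracKernel_mul_partialSups hβ0 hτ hlambda hlam hsum hv hγ hD
      (hj.trans hkn) fun m hm => hG m (hm.trans hj)
  exact (le_partialSups v k).trans (le_two_mul_mittagLeffler_of_le_add_sum_fracKernel hβ0 hβ1 hτ
    hlambda hstep (fun j _ => sups_nonneg j) hG0 sups_le k le_rfl)

end Gronwall

/-- Discrete fractional Grönwall inequality. -/
theorem discrete_fractional_gronwall (β τ θ : ℝ) (hβ0 : 0 < β) (hβ1 : β < 1)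
    (hτ : 0 < τ) (hθ0 : 0 ≤ θ) (hθ1 : θ ≤ 1)
    (nT : ℕ) (hnT : 1 ≤ nT)
    (g v lam : ℕ → ℝ) (lambda : ℝ)
    (hg : ∀ k ≤ nT, 0 ≤ g k) (hlam : ∀ l < nT, 0 ≤ lam l)
    (hlambda : 0 ≤ lambda)
    (hsum : ∑ l ∈ Finset.range nT, lam l ≤ lambda)
    (hstep : τ ≤ (2 * lambda * (1 + β)) ^ (-(1 / β)))
    (hv : ∀ k ≤ nT, 0 ≤ v k)
    (hineq : ∀ k : ℕ, 1 ≤ k → k ≤ nT →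
      τ ^ (-β) * ∑ j ∈ Finset.range (k + 1), varpi β (k - j) * ((v j) ^ 2 - (v 0) ^ 2)
        ≤ (∑ l ∈ Finset.Icc 1 k, lam (k - l) * (v l) ^ 2)
          + ((1 - θ) * v k + θ * v (k - 1)) * ((1 - θ) * g k + θ * g (k - 1))) :
    ∀ k : ℕ, ∀ hk : 1 ≤ k, k ≤ nT →
      v k ≤ 2 * mittagLeffler β (2 * lambda * ((k : ℝ) * τ) ^ β) *
        (v 0 + (Finset.Icc 1 k).sup' (Finset.nonempty_Icc.mpr hk)
          (fun m => ∑ j ∈ Finset.Icc 1 m,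
            τ ^ β * varrho β (m - j) * ((1 - θ) * g j + θ * g (j - 1)))) := by
  have hγ : ∀ j ∈ Icc 1 nT, 0 ≤ (1 - θ) * g j + θ * g (j - 1) := by
    intro j hj
    have hjn := (mem_Icc.1 hj).2
    exact add_nonneg (mul_nonneg (sub_nonneg.2 hθ1) (hg j hjn))
      (mul_nonneg hθ0 (hg (j - 1) ((j.sub_le 1).trans hjn)))
  intro k hk hkn
  refine discrete_fractional_gronwall_general hβ0 hβ1.le hτ hlam hsum
    (two_mul_mul_rpow_le_one hβ0 hτ.le hlambda hstep) hv hγ (fun j hj => ?_) hk hkn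
  obtain ⟨hj1, hjn⟩ := mem_Icc.1 hj
  exact (hineq j hj1 hjn).trans <| add_le_add_right
    (mul_le_mul_of_nonneg_right (convexComb_le_partialSups hθ0 hθ1 v j) (hγ j hj)) _
end
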